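/- Let D(x) and S(x) be polynomials with nonnegative integer coefficients such that D(1) > 0, S(1) > 0, and P := D + S has at least two nonzero coefficients. Define polynomials D_n, S_n by D_1 = D, S_1 = S and D_n(x) = (D(x)+S(x))·D_{n−1}(x) + D(x)·S_{n−1}(x), S_n(x) = S(x)·S_{n−1}(x), and set P_n := D_n + S_n, with coefficients P_n(x) = Σ_i p_i(n)x^i. Let e := P′(1)/P(1) and v := (−P′(1)² + P(1)·(P″(1)+P′(1)))/P(1)². Then v > 0 and the coefficient distributions of P_n are asymptotically normal with mean e·n and variance v·n: lim_{n→∞} sup_{x∈ℝ} | (1/P_n(1)) Σ_{0 ≤ i ≤ x√(v·n)+e·n} p_i(n) − (1/√(2π)) ∫_{−∞}^{x} e^{−u²/2} du | = 0. -/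

import Mathlib

open Polynomial Filter Set MeasureTheory

/-- Sum of the coefficients `p i` of `P` over indices `0 ≤ i ≤ y`. -/
noncomputable def cdfSum (P : Polynomial ℝ) (y : ℝ) : ℝ :=
  ∑ i ∈ P.support, if (i : ℝ) ≤ y then P.coeff i else 0

/-- The standard normal cumulative distribution function. -/
noncomputable def stdNormalCDF (x : ℝ) : ℝ :=
  (Real.sqrt (2 * Real.pi))⁻¹ * ∫ u in Set.Iic x, Real.exp (-u ^ 2 / 2)

/-! Both columns of the production matrix `[[D + S, D], [0, S]]` sum to `D + S`, so `Pₙ = Dₙ + Sₙ`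
is the power `(D + S) ^ n`. The normalised coefficients of `P ^ n` are therefore the law of a sum of
`n` independent variables distributed as the normalised coefficients of `P`; here this enters
through characteristic functions, that of `P ^ n` being the `n`-th power of that of `P`. The central
limit theorem gives weak convergence of the standardised laws, with nonzero variance because two
coefficients are positive. Convergence of the distribution functions is uniform because they are
monotone and the limit is continuous on the compact space `[-∞, ∞]`. -/

section UniformConvergence

open scoped Topology

variable {ι : Type*} {l : Filter ι}

theorem tendstoUniformly_of_monotone_of_continuous {α : Type*} [LinearOrder α]
    [TopologicalSpace α] [OrderTopology α] [CompactSpace α] {F : ι → α → ℝ} {G : α → ℝ}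
    (hF : ∀ i, Monotone (F i)) (hG : Continuous G)
    (h : ∀ x, Tendsto (fun i ↦ F i x) l (𝓝 (G x))) : TendstoUniformly F G l := by
  rw [← tendstoLocallyUniformly_iff_tendstoUniformly_of_compactSpace,
    Metric.tendstoLocallyUniformly_iff]
  intro ε hε x
  have hball : G ⁻¹' Metric.ball (G x) (ε / 3) ∈ 𝓝 x :=
    hG.continuousAt (Metric.ball_mem_nhds _ (by positivity))
  obtain ⟨a, b, hx, hmem, hsub⟩ := exists_Icc_mem_subset_of_mem_nhds hball
  have hG_near : ∀ y ∈ Icc a b, |G y - G x| < ε / 3 := fun y hy ↦ hsub hy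
  have hab : a ≤ b := hx.1.trans hx.2
  refine ⟨Icc a b, hmem, ?_⟩
  filter_upwards [Metric.tendsto_nhds.1 (h a) (ε / 3) (by positivity),
    Metric.tendsto_nhds.1 (h b) (ε / 3) (by positivity)] with i hia hib y hy
  have hGa := abs_lt.1 (hG_near a (left_mem_Icc.2 hab))
  have hGb := abs_lt.1 (hG_near b (right_mem_Icc.2 hab))
  have hGy := abs_lt.1 (hG_near y hy)
  rw [Real.dist_eq, abs_lt] at hia hib ⊢
  have hFa : F i a ≤ F i y := hF i hy.1
  have hFb : F i y ≤ F i b := hF i hy.2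
  constructor <;> linarith

theorem tendsto_iSup_abs_sub_of_tendstoUniformly {α : Type*} {F : ι → α → ℝ} {G : α → ℝ}
    (h : TendstoUniformly F G l) : Tendsto (fun i ↦ ⨆ x, |F i x - G x|) l (𝓝 0) := by
  rw [Metric.tendsto_nhds]
  intro ε hε
  filter_upwards [Metric.tendstoUniformly_iff.1 h (ε / 2) (by positivity)] with i hi
  have hle : ⨆ x, |F i x - G x| ≤ ε / 2 :=
    Real.iSup_le (fun x ↦ by simpa only [dist_comm, Real.dist_eq] using (hi x).le) (by positivity)
  rw [Real.dist_0_eq_abs, abs_of_nonneg (Real.iSup_nonneg fun x ↦ abs_nonneg _)]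
  linarith

theorem continuous_measureReal_Iic {α : Type*} [LinearOrder α] [TopologicalSpace α]
    [OrderTopology α] [FirstCountableTopology α] [MeasurableSpace α] [OpensMeasurableSpace α]
    (μ : Measure α) [IsFiniteMeasure μ] [NullSingletonClass μ] :
    Continuous fun x ↦ μ.real (Iic x) := by
  refine continuous_iff_continuousAt.2 fun x ↦ ?_
  have hcont : ∀ y, y ≠ x → ContinuousAt (fun z ↦ (Iic z).indicator (1 : α → ℝ) y) x := by
    intro y hyx
    refine continuousAt_const.congr (f := fun _ ↦ (Iic x).indicator (1 : α → ℝ) y) ?_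
    rcases hyx.lt_or_gt with hlt | hgt
    · filter_upwards [lt_mem_nhds hlt] with z hz
      simp [hlt.le, hz.le]
    · filter_upwards [gt_mem_nhds hgt] with z hz
      simp [hgt, hz]
  simp_rw [← integral_indicator_one (μ := μ) measurableSet_Iic]
  refine continuousAt_of_dominated (bound := 1)
    (.of_forall fun z ↦ (measurable_one.indicator measurableSet_Iic).aestronglyMeasurable)
    (.of_forall fun z ↦ .of_forall fun y ↦ ?_) (integrable_const 1)
    ((measure_eq_zero_iff_ae_notMem.1 (measure_singleton x)).mono hcont)
  simpa using norm_indicator_le_norm_self (1 : α → ℝ) y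

theorem tendstoUniformly_measureReal_Iic_of_compactSpace {α : Type*} [LinearOrder α]
    [TopologicalSpace α] [OrderTopology α] [CompactSpace α] [FirstCountableTopology α]
    [MeasurableSpace α] [OpensMeasurableSpace α] [HasOuterApproxClosed α]
    {μ : ι → ProbabilityMeasure α} {ν : ProbabilityMeasure α}
    [NullSingletonClass (ν : Measure α)] (h : Tendsto μ l (𝓝 ν)) :
    TendstoUniformly (fun i x ↦ (μ i : Measure α).real (Iic x))
      (fun x ↦ (ν : Measure α).real (Iic x)) l := by
  refine tendstoUniformly_of_monotone_of_continuous
    (fun i x y hxy ↦ measureReal_mono (Iic_subset_Iic.2 hxy)) (continuous_measureReal_Iic _)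
    fun x ↦ ?_
  have hfrontier : (ν : Measure α) (frontier (Iic x)) = 0 :=
    measure_mono_null (frontier_Iic_subset x) (measure_singleton x)
  exact (ENNReal.tendsto_toReal (measure_ne_top _ _)).comp
    (ProbabilityMeasure.tendsto_measure_of_null_frontier_of_tendsto' h hfrontier)

theorem tendstoUniformly_measureReal_Iic {μ : ι → ProbabilityMeasure ℝ}
    {ν : ProbabilityMeasure ℝ} [NullSingletonClass (ν : Measure ℝ)] (h : Tendsto μ l (𝓝 ν)) :
    TendstoUniformly (fun i x ↦ (μ i : Measure ℝ).real (Iic x))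
      (fun x ↦ (ν : Measure ℝ).real (Iic x)) l := by
  have hcoe := continuous_coe_real_ereal
  let toEReal (ρ : ProbabilityMeasure ℝ) : ProbabilityMeasure EReal :=
    ρ.map hcoe.measurable.aemeasurable
  have hreal (ρ : ProbabilityMeasure ℝ) (x : ℝ) :
      (toEReal ρ : Measure EReal).real (Iic (x : EReal)) = (ρ : Measure ℝ).real (Iic x) := by
    rw [ProbabilityMeasure.toMeasure_map,
      map_measureReal_apply hcoe.measurable measurableSet_Iic]
    congr 1
    ext y
    simp
  have : NullSingletonClass (toEReal ν : Measure EReal) := by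
    refine ⟨fun x ↦ ?_⟩
    rw [ProbabilityMeasure.toMeasure_map,
      Measure.map_apply hcoe.measurable (measurableSet_singleton x)]
    exact (subsingleton_singleton.preimage EReal.coe_injective).measure_zero _
  have hEReal : Tendsto (fun i ↦ toEReal (μ i)) l (𝓝 (toEReal ν)) :=
    ProbabilityMeasure.tendsto_map_of_tendsto_of_continuous μ ν h hcoe
  simpa only [Function.comp_def, hreal] using
    (tendstoUniformly_measureReal_Iic_of_compactSpace hEReal).comp ((↑) : ℝ → EReal)

end UniformConvergence

section CentralLimit

open ProbabilityTheory
open scoped Topology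

theorem charFun_map_sub_div (μ : Measure ℝ) (a s t : ℝ) :
    charFun (μ.map fun x ↦ (x - a) / s) t =
      Complex.exp (-((t / s : ℝ) * a * Complex.I)) * charFun μ (t / s) := by
  rw [charFun_apply_real, charFun_apply_real, integral_map (by fun_prop) (by fun_prop),
    ← integral_const_mul]
  congr with x
  rw [← Complex.exp_add]
  congr 1
  push_cast
  ring

theorem measureReal_map_sub_div_Iic (μ : Measure ℝ) (a : ℝ) {s : ℝ} (hs : 0 < s) (x : ℝ) :
    (μ.map fun y ↦ (y - a) / s).real (Iic x) = μ.real (Iic (x * s + a)) := by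
  rw [map_measureReal_apply (by fun_prop) measurableSet_Iic]
  congr 1
  ext y
  simp only [mem_preimage, mem_Iic, div_le_iff₀ hs, sub_le_iff_le_add]

theorem charFun_map_sub_div_of_charFun_eq_pow {μ ν : Measure ℝ} {n : ℕ}
    (hν : ∀ t, charFun ν t = charFun μ t ^ n) (m v t : ℝ) :
    charFun (ν.map fun x ↦ (x - m * n) / √(v * n)) t =
      charFun (μ.map fun x ↦ (x - m) / √v) ((√n)⁻¹ * t) ^ n := by
  have hscale : t / √(v * n) = (√n)⁻¹ * t / √v := by
    rw [Real.sqrt_mul' v n.cast_nonneg]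
    ring
  rw [charFun_map_sub_div, charFun_map_sub_div, hscale, hν, mul_pow, ← Complex.exp_nat_mul]
  congr 2
  push_cast
  ring

theorem tendsto_map_sub_div_gaussianReal_of_charFun_eq_pow {μ : Measure ℝ}
    [IsProbabilityMeasure μ] (hvar : Var[id; μ] ≠ 0) {ν : ℕ → ProbabilityMeasure ℝ}
    (hν : ∀ n t, charFun (ν n : Measure ℝ) t = charFun μ t ^ n) :
    Tendsto (fun n : ℕ ↦ (ν n).map (f := fun x ↦ (x - μ[id] * n) / √(Var[id; μ] * n))
        (by fun_prop)) atTop (𝓝 ⟨gaussianReal 0 1, inferInstance⟩) := by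
  have hLp : MemLp id 2 μ := memLp_two_of_variance_ne_zero (by fun_prop) hvar
  have hmean : μ[fun x ↦ (x - μ[id]) / √Var[id; μ]] = 0 := by
    have hint : Integrable (fun x : ℝ ↦ x) μ := hLp.integrable (by norm_num)
    rw [integral_div, integral_sub hint (integrable_const _)]
    simp
  have hsq : μ[(fun x ↦ (x - μ[id]) / √Var[id; μ]) ^ 2] = 1 := by
    simp only [Pi.pow_apply, div_pow, Real.sq_sqrt (variance_nonneg id μ)]
    rw [integral_div, div_eq_one_iff_eq hvar, variance_eq_integral aemeasurable_id]
    rfl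
  refine ProbabilityMeasure.tendsto_iff_tendsto_charFun.2 fun t ↦ ?_
  have hlim := tendsto_charFun_inv_sqrt_mul_pow (P := μ) (by fun_prop) hmean hsq t
  simp only [ProbabilityMeasure.toMeasure_map, charFun_map_sub_div_of_charFun_eq_pow (hν _)]
  simpa [charFun_gaussianReal, neg_div] using hlim

theorem stdNormalCDF_eq_gaussianReal_Iic (x : ℝ) :
    stdNormalCDF x = (gaussianReal 0 1).real (Iic x) := by
  rw [measureReal_def, gaussianReal_apply_eq_integral 0 one_ne_zero, ENNReal.toReal_ofReal
    (setIntegral_nonneg measurableSet_Iic fun u _ ↦ gaussianPDFReal_nonneg _ _ _)]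
  simp [stdNormalCDF, gaussianPDFReal, integral_const_mul]

theorem tendstoUniformly_stdNormalCDF_of_charFun_eq_pow {μ : Measure ℝ}
    [IsProbabilityMeasure μ] (hvar : Var[id; μ] ≠ 0) {ν : ℕ → ProbabilityMeasure ℝ}
    (hν : ∀ n t, charFun (ν n : Measure ℝ) t = charFun μ t ^ n) :
    TendstoUniformly
      (fun (n : ℕ) x ↦ (ν n : Measure ℝ).real (Iic (x * √(Var[id; μ] * n) + μ[id] * n)))
      stdNormalCDF atTop := by
  let γ : ProbabilityMeasure ℝ := ⟨gaussianReal 0 1, inferInstance⟩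
  have : NullSingletonClass (γ : Measure ℝ) := nullSingletonClass_gaussianReal one_ne_zero
  rw [funext stdNormalCDF_eq_gaussianReal_Iic]
  refine (tendstoUniformly_congr ?_).1 (tendstoUniformly_measureReal_Iic (ν := γ)
    (tendsto_map_sub_div_gaussianReal_of_charFun_eq_pow hvar hν))
  filter_upwards [eventually_gt_atTop 0] with n hn
  funext x
  have hpos : 0 < Var[id; μ] := (variance_nonneg _ _).lt_of_ne' hvar
  exact measureReal_map_sub_div_Iic _ _ (by positivity) x

end CentralLimit

section CoefficientLaw

open ProbabilityTheory

variable {P : ℝ[X]}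

theorem eval_one_eq_sum_coeff {R : Type*} [Semiring R] (P : R[X]) :
    P.eval 1 = ∑ i ∈ P.support, P.coeff i := by
  simp [eval_eq_sum, sum_def]

theorem eval_one_derivative_eq_sum {R : Type*} [Semiring R] (P : R[X]) :
    P.derivative.eval 1 = ∑ i ∈ P.support, P.coeff i * i := by
  simp [derivative_eval, sum_def]

theorem eval_one_derivative_derivative_add {R : Type*} [CommSemiring R] (P : R[X]) :
    P.derivative.derivative.eval 1 + P.derivative.eval 1 =
      ∑ i ∈ P.support, P.coeff i * (i : R) ^ 2 := by
  have hmonomial (i : ℕ) : (derivative (derivative (monomial i (P.coeff i)))).eval 1 +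
      (derivative (monomial i (P.coeff i))).eval 1 = P.coeff i * (i : R) ^ 2 := by
    simp only [derivative_monomial, eval_monomial, one_pow, mul_one]
    cases i with
    | zero => simp
    | succ i => push_cast [Nat.add_sub_cancel]; ring
  conv_lhs => rw [P.as_sum_support]
  simp only [derivative_sum, eval_finsetSum, ← Finset.sum_add_distrib, hmonomial]

theorem coeff_pow_nonneg {R : Type*} [CommSemiring R] [PartialOrder R] [IsOrderedRing R]
    {P : R[X]} (hP : ∀ i, 0 ≤ P.coeff i) (n i : ℕ) : 0 ≤ (P ^ n).coeff i := by
  induction n generalizing i with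
  | zero => rw [pow_zero, coeff_one]; split_ifs <;> simp
  | succ n ih =>
    rw [pow_succ, coeff_mul]
    exact Finset.sum_nonneg fun x _ ↦ mul_nonneg (ih _) (hP _)

theorem coeff_pos_of_mem_support (hP : ∀ i, 0 ≤ P.coeff i) {i : ℕ} (hi : i ∈ P.support) :
    0 < P.coeff i :=
  (hP i).lt_of_ne' (mem_support_iff.1 hi)

theorem eval_one_pos (hP : ∀ i, 0 ≤ P.coeff i) (h0 : P ≠ 0) : 0 < P.eval 1 := by
  rw [eval_one_eq_sum_coeff]
  exact Finset.sum_pos (fun i hi ↦ coeff_pos_of_mem_support hP hi) (nonempty_support_iff.2 h0)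

/-- The law on `ℝ` giving the point `i` the mass `P.coeff i / P.eval 1`: the coefficient
distribution of `P`. It is a probability measure when `P ≠ 0` has nonnegative coefficients. -/
noncomputable def coeffLaw (P : ℝ[X]) : Measure ℝ :=
  ∑ i ∈ P.support, ENNReal.ofReal (P.coeff i / P.eval 1) • Measure.dirac (i : ℝ)

theorem isProbabilityMeasure_coeffLaw (hP : ∀ i, 0 ≤ P.coeff i) (h0 : P ≠ 0) :
    IsProbabilityMeasure (coeffLaw P) := by
  have h1 : 0 < P.eval 1 := eval_one_pos hP h0
  constructor
  simp only [coeffLaw, Measure.coe_finsetSum, Finset.sum_apply, Measure.smul_apply, measure_univ,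
    smul_eq_mul, mul_one]
  rw [← ENNReal.ofReal_sum_of_nonneg fun i _ ↦ div_nonneg (hP i) h1.le, ← Finset.sum_div,
    ← eval_one_eq_sum_coeff, div_self h1.ne', ENNReal.ofReal_one]

theorem integrable_coeffLaw {E : Type*} [NormedAddCommGroup E] (P : ℝ[X]) (f : ℝ → E) :
    Integrable f (coeffLaw P) :=
  integrable_finsetSum_measure.2 fun _ _ ↦
    (integrable_dirac (by simp)).smul_measure ENNReal.ofReal_ne_top

theorem integral_coeffLaw {E : Type*} [NormedAddCommGroup E] [NormedSpace ℝ E] [CompleteSpace E]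
    (hP : ∀ i, 0 ≤ P.coeff i) (f : ℝ → E) :
    ∫ x, f x ∂coeffLaw P = ∑ i ∈ P.support, (P.coeff i / P.eval 1) • f i := by
  have h1 : 0 ≤ P.eval 1 := eval_one_eq_sum_coeff P ▸ Finset.sum_nonneg fun i _ ↦ hP i
  rw [coeffLaw, integral_finsetSum_measure
    (integrable_finsetSum_measure.1 (integrable_coeffLaw P f))]
  refine Finset.sum_congr rfl fun i _ ↦ ?_
  rw [integral_smul_measure, integral_dirac, ENNReal.toReal_ofReal (div_nonneg (hP i) h1)]

theorem ae_coeffLaw_iff (hP : ∀ i, 0 ≤ P.coeff i) {p : ℝ → Prop} :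
    (∀ᵐ x ∂coeffLaw P, p x) ↔ ∀ i ∈ P.support, p i := by
  rw [coeffLaw, ae_finsetSum_measure_iff]
  refine forall₂_congr fun i hi ↦ ?_
  have h1 : 0 < P.eval 1 := eval_one_pos hP (nonempty_support_iff.1 ⟨i, hi⟩)
  have hmass : 0 < P.coeff i / P.eval 1 := div_pos (coeff_pos_of_mem_support hP hi) h1
  rw [Measure.ae_ennreal_smul_measure_iff (ENNReal.ofReal_pos.2 hmass).ne', ae_dirac_eq]
  rfl

theorem measureReal_coeffLaw_Iic (hP : ∀ i, 0 ≤ P.coeff i) (y : ℝ) :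
    (coeffLaw P).real (Iic y) = cdfSum P y / P.eval 1 := by
  rw [← integral_indicator_one measurableSet_Iic, integral_coeffLaw hP, cdfSum, Finset.sum_div]
  refine Finset.sum_congr rfl fun i _ ↦ ?_
  by_cases hi : (i : ℝ) ≤ y <;> simp [hi]

theorem charFun_coeffLaw (hP : ∀ i, 0 ≤ P.coeff i) (t : ℝ) :
    charFun (coeffLaw P) t = aeval (Complex.exp (t * Complex.I)) P / (P.eval 1 : ℝ) := by
  rw [charFun_apply_real, integral_coeffLaw hP, aeval_def, eval₂_eq_sum, sum_def,
    Finset.sum_div]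
  refine Finset.sum_congr rfl fun i _ ↦ ?_
  rw [← Complex.exp_nat_mul, Complex.real_smul, Complex.coe_algebraMap, Complex.ofReal_div,
    div_mul_eq_mul_div]
  congr 3
  push_cast
  ring

theorem charFun_coeffLaw_pow (hP : ∀ i, 0 ≤ P.coeff i) (n : ℕ) (t : ℝ) :
    charFun (coeffLaw (P ^ n)) t = charFun (coeffLaw P) t ^ n := by
  rw [charFun_coeffLaw (coeff_pow_nonneg hP n), charFun_coeffLaw hP, map_pow, eval_pow,
    Complex.ofReal_pow, div_pow]

theorem integral_id_coeffLaw (hP : ∀ i, 0 ≤ P.coeff i) :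
    ∫ x, id x ∂coeffLaw P = P.derivative.eval 1 / P.eval 1 := by
  rw [integral_coeffLaw hP, eval_one_derivative_eq_sum, Finset.sum_div]
  exact Finset.sum_congr rfl fun i _ ↦ div_mul_eq_mul_div _ _ _

theorem integral_id_sq_coeffLaw (hP : ∀ i, 0 ≤ P.coeff i) :
    ∫ x, (id ^ 2 : ℝ → ℝ) x ∂coeffLaw P =
      (P.derivative.derivative.eval 1 + P.derivative.eval 1) / P.eval 1 := by
  rw [integral_coeffLaw hP, eval_one_derivative_derivative_add, Finset.sum_div]
  exact Finset.sum_congr rfl fun i _ ↦ div_mul_eq_mul_div _ _ _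

theorem memLp_two_id_coeffLaw (P : ℝ[X]) : MemLp id 2 (coeffLaw P) :=
  (memLp_two_iff_integrable_sq aestronglyMeasurable_id).2 (integrable_coeffLaw P _)

theorem variance_id_coeffLaw (hP : ∀ i, 0 ≤ P.coeff i) (h0 : P ≠ 0) :
    Var[id; coeffLaw P] = (-(P.derivative.eval 1) ^ 2 +
      P.eval 1 * (P.derivative.derivative.eval 1 + P.derivative.eval 1)) / P.eval 1 ^ 2 := by
  have := isProbabilityMeasure_coeffLaw hP h0
  have h1 : P.eval 1 ≠ 0 := (eval_one_pos hP h0).ne'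
  rw [variance_eq_sub (memLp_two_id_coeffLaw P), integral_id_sq_coeffLaw hP,
    integral_id_coeffLaw hP]
  field_simp
  ring

theorem variance_id_coeffLaw_pos (hP : ∀ i, 0 ≤ P.coeff i) (hcard : 2 ≤ P.support.card) :
    0 < Var[id; coeffLaw P] := by
  refine (variance_nonneg _ _).lt_of_ne' fun hvar ↦ ?_
  obtain ⟨i, hi, j, hj, hij⟩ := Finset.one_lt_card.1 hcard
  have := isProbabilityMeasure_coeffLaw hP (nonempty_support_iff.1 ⟨i, hi⟩)
  have hconst : ∀ k ∈ P.support, (k : ℝ) = ∫ x, id x ∂coeffLaw P :=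
    (ae_coeffLaw_iff hP).1 (ae_eq_integral_of_variance_eq_zero (memLp_two_id_coeffLaw P) hvar)
  exact hij (Nat.cast_injective ((hconst i hi).trans (hconst j hj).symm))

theorem tendstoUniformly_cdfSum_pow (hP : ∀ i, 0 ≤ P.coeff i) (hcard : 2 ≤ P.support.card) :
    TendstoUniformly
      (fun (n : ℕ) x ↦ cdfSum (P ^ n) (x * √(Var[id; coeffLaw P] * n) + (coeffLaw P)[id] * n) /
        (P ^ n).eval 1)
      stdNormalCDF atTop := by
  have h0 : P ≠ 0 := nonempty_support_iff.1 (Finset.card_pos.1 (by lia))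
  have := isProbabilityMeasure_coeffLaw hP h0
  let ν (n : ℕ) : ProbabilityMeasure ℝ :=
    ⟨coeffLaw (P ^ n), isProbabilityMeasure_coeffLaw (coeff_pow_nonneg hP n) (pow_ne_zero n h0)⟩
  simpa only [ν, ProbabilityMeasure.coe_mk, measureReal_coeffLaw_Iic (coeff_pow_nonneg hP _)] using
    tendstoUniformly_stdNormalCDF_of_charFun_eq_pow (ν := ν)
      (variance_id_coeffLaw_pos hP hcard).ne' (charFun_coeffLaw_pow hP)

end CoefficientLaw

theorem production_add_eq_pow {R : Type*} [CommSemiring R] {d s : R} {D S : ℕ → R}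
    (hD1 : D 1 = d) (hS1 : S 1 = s) (hD : ∀ n, 2 ≤ n → D n = (d + s) * D (n - 1) + d * S (n - 1))
    (hS : ∀ n, 2 ≤ n → S n = s * S (n - 1)) {n : ℕ} (hn : 1 ≤ n) : D n + S n = (d + s) ^ n := by
  induction n, hn using Nat.le_induction with
  | base => rw [hD1, hS1, pow_one]
  | succ n hn ih =>
    rw [hD (n + 1) (by lia), hS (n + 1) (by lia), Nat.add_sub_cancel, pow_succ, ← ih]
    ring

theorem pathlike_genus_asymptotically_normal_general
    {Dp Sp : ℝ[X]} (hcoeff : ∀ i, 0 ≤ (Dp + Sp).coeff i) (hsupp : 2 ≤ (Dp + Sp).support.card)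
    {Dn Sn Pn : ℕ → ℝ[X]} (hDn1 : Dn 1 = Dp) (hSn1 : Sn 1 = Sp)
    (hDnrec : ∀ n, 2 ≤ n → Dn n = (Dp + Sp) * Dn (n - 1) + Dp * Sn (n - 1))
    (hSnrec : ∀ n, 2 ≤ n → Sn n = Sp * Sn (n - 1))
    (hPn : ∀ n, Pn n = Dn n + Sn n) {e v : ℝ}
    (he : e = (Dp + Sp).derivative.eval 1 / (Dp + Sp).eval 1)
    (hv : v = (-((Dp + Sp).derivative.eval 1) ^ 2 +
        (Dp + Sp).eval 1 *
          ((Dp + Sp).derivative.derivative.eval 1 + (Dp + Sp).derivative.eval 1)) /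
        ((Dp + Sp).eval 1) ^ 2) :
    0 < v ∧
    Tendsto (fun n : ℕ => ⨆ x : ℝ,
        |cdfSum (Pn n) (x * √(v * n) + e * n) / (Pn n).eval 1 - stdNormalCDF x|)
      atTop (nhds 0) := by
  have h0 : Dp + Sp ≠ 0 := nonempty_support_iff.1 (Finset.card_pos.1 (by lia))
  rw [← integral_id_coeffLaw hcoeff] at he
  rw [← variance_id_coeffLaw hcoeff h0] at hv
  subst he hv
  refine ⟨variance_id_coeffLaw_pos hcoeff hsupp,
    tendsto_iSup_abs_sub_of_tendstoUniformly
      ((tendstoUniformly_congr ?_).1 (tendstoUniformly_cdfSum_pow hcoeff hsupp))⟩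
  filter_upwards [eventually_ge_atTop 1] with n hn
  rw [hPn, production_add_eq_pow hDn1 hSn1 hDnrec hSnrec hn]

theorem pathlike_genus_asymptotically_normal
    (Dp Sp : Polynomial ℝ)
    (hDcoeff : ∀ i, ∃ m : ℕ, Dp.coeff i = (m : ℝ))
    (hScoeff : ∀ i, ∃ m : ℕ, Sp.coeff i = (m : ℝ))
    (hD1 : 0 < Dp.eval 1) (hS1 : 0 < Sp.eval 1)
    (hsupp : 2 ≤ (Dp + Sp).support.card)
    (Dn Sn Pn : ℕ → Polynomial ℝ)
    (hDn1 : Dn 1 = Dp) (hSn1 : Sn 1 = Sp)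
    (hDnrec : ∀ n, 2 ≤ n → Dn n = (Dp + Sp) * Dn (n - 1) + Dp * Sn (n - 1))
    (hSnrec : ∀ n, 2 ≤ n → Sn n = Sp * Sn (n - 1))
    (hPn : ∀ n, Pn n = Dn n + Sn n)
    (e v : ℝ)
    (he : e = (Dp + Sp).derivative.eval 1 / (Dp + Sp).eval 1)
    (hv : v = (-((Dp + Sp).derivative.eval 1) ^ 2 +
        (Dp + Sp).eval 1 *
          ((Polynomial.derivative (Polynomial.derivative (Dp + Sp))).eval 1 +
            (Dp + Sp).derivative.eval 1)) / ((Dp + Sp).eval 1) ^ 2) :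
    0 < v ∧
    Filter.Tendsto (fun n : ℕ => ⨆ x : ℝ,
        |cdfSum (Pn n) (x * Real.sqrt (v * n) + e * n) / (Pn n).eval 1 - stdNormalCDF x|)
      Filter.atTop (nhds 0) := by
  have hcoeff (i : ℕ) : 0 ≤ (Dp + Sp).coeff i := by
    obtain ⟨a, ha⟩ := hDcoeff i
    obtain ⟨b, hb⟩ := hScoeff i
    rw [coeff_add, ha, hb]
    positivity
  exact pathlike_genus_asymptotically_normal_general hcoeff hsupp hDn1 hSn1 hDnrec hSnrec hPn he hv
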